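/- Let G be an abelian group, X a compact Hausdorff topological space, and θ = ({X_t}_{t∈G}, {h_t}_{t∈G}) a topologically free and minimal topological partial action of G on X such that each X_t is clopen. Let α be the induced partial action of G on C(X) and R = C(X) ⋆_α G. Then the center of R equals ℂ·(1δ_0), the set of elements cδ_0 with c a constant function on X; in particular the center of R is a field. -/

import Mathlib

/-- A partial action `θ = ({X_t}, {h_t})` of a group `G` on a set `X`: subsets
`Xt t ⊆ X` and bijections `h t : Xt t⁻¹ → Xt t` (encoded as globally defined maps
whose values only matter on `Xt t⁻¹`). -/
structure SetPartialAction (G : Type*) [Group G] (X : Type*) where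
  Xt : G → Set X
  h : G → X → X
  h_mem : ∀ t, ∀ x ∈ Xt t⁻¹, h t x ∈ Xt t
  Xt_one : Xt 1 = Set.univ
  h_one : ∀ x, h 1 x = x
  h_left_inv : ∀ t, ∀ x ∈ Xt t⁻¹, h t⁻¹ (h t x) = x
  h_image : ∀ t s, h t '' (Xt t⁻¹ ∩ Xt s) = Xt t ∩ Xt (t * s)
  h_comp : ∀ t s, ∀ x ∈ Xt s⁻¹, x ∈ Xt (s⁻¹ * t⁻¹) → h t (h s x) = h (t * s) x

/-- A topological partial action of `G` on a topological space `X` in which every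
`Xt t` is clopen: the maps `h t : Xt t⁻¹ → Xt t` are homeomorphisms, i.e.
continuous on their domains (continuity of the inverse `h t⁻¹` on `Xt t` is an
instance of the same field at `t⁻¹`). -/
structure TopPartialAction (G : Type*) [Group G] (X : Type*) [TopologicalSpace X]
    extends SetPartialAction G X where
  clopen : ∀ t, IsClopen (Xt t)
  h_cont : ∀ t, ContinuousOn (h t) (Xt t⁻¹)

namespace SetPartialAction

variable {G : Type*} [Group G] {X : Type*}

/-- A subset `V ⊆ X` is `G`-invariant if `h t (V ∩ Xt t⁻¹) ⊆ V` for all `t`. -/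
def Invariant (θ : SetPartialAction G X) (V : Set X) : Prop :=
  ∀ t : G, θ.h t '' (V ∩ θ.Xt t⁻¹) ⊆ V

end SetPartialAction

namespace TopPartialAction

variable {G : Type*} [Group G] {X : Type*} [TopologicalSpace X]

/-- `θ` is minimal if `∅` and `X` are the only open `G`-invariant subsets of `X`. -/
def Minimal (θ : TopPartialAction G X) : Prop :=
  ∀ V : Set X, IsOpen V → θ.toSetPartialAction.Invariant V → V = ∅ ∨ V = Set.univ

/-- `θ` is topologically free if for every `t ≠ 1` the set
`F_t = {x ∈ Xt t⁻¹ : h t x = x}` has empty interior. -/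
def TopologicallyFree (θ : TopPartialAction G X) : Prop :=
  ∀ t : G, t ≠ 1 → interior {x ∈ θ.Xt t⁻¹ | θ.h t x = x} = ∅

/-- The ideal `D t = C(X_t) = {f ∈ C(X) : f = 0 off X_t}` of `C(X) = C(X, ℂ)`,
as an additive subgroup. -/
noncomputable def DC (θ : TopPartialAction G X) (t : G) : AddSubgroup C(X, ℂ) where
  carrier := {f : C(X, ℂ) | ∀ x ∉ θ.Xt t, f x = 0}
  zero_mem' := by intro x _; simp
  add_mem' := by intro f g hf hg x hx; simp [hf x hx, hg x hx]
  neg_mem' := by intro f hf x hx; simp [hf x hx]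

open Classical in
/-- The induced map `α t : C(X) → C(X)`, `α t f = f ∘ h t⁻¹` on `Xt t`, extended by
zero off `Xt t` (continuous since `Xt t` is clopen). -/
noncomputable def amapC (θ : TopPartialAction G X) (t : G) (f : C(X, ℂ)) : C(X, ℂ) :=
  ⟨fun x => if x ∈ θ.Xt t then f (θ.h t⁻¹ x) else 0, by
    rw [continuous_iff_continuousAt]
    intro x
    by_cases hx : x ∈ θ.Xt t
    · have hopen : IsOpen (θ.Xt t) := (θ.clopen t).isOpen
      have hc : ContinuousOn (fun y => f (θ.h t⁻¹ y)) (θ.Xt t) := by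
        apply f.continuous.comp_continuousOn
        have h1 := θ.h_cont t⁻¹
        rwa [inv_inv] at h1
      have hca := hc.continuousAt (hopen.mem_nhds hx)
      apply hca.congr
      filter_upwards [hopen.mem_nhds hx] with y hy
      simp [hy]
    · have hopen : IsOpen (θ.Xt t)ᶜ := (θ.clopen t).compl.isOpen
      have hca : ContinuousAt (fun _ : X => (0 : ℂ)) x := continuousAt_const
      apply hca.congr
      filter_upwards [hopen.mem_nhds hx] with y hy
      simp only [Set.mem_compl_iff] at hy
      simp [hy]⟩

/-- An ideal `I ⊆ C(X)` is `G`-invariant: `α t (I ∩ D t⁻¹) ⊆ I ∩ D t`. -/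
def GInvariantC (θ : TopPartialAction G X) (I : Ideal C(X, ℂ)) : Prop :=
  ∀ t : G, ∀ f ∈ I, f ∈ θ.DC t⁻¹ → θ.amapC t f ∈ I ∧ θ.amapC t f ∈ θ.DC t

/-- The underlying additive group of the partial skew group ring `C(X) ⋆_α G`. -/
abbrev SkewC (θ : TopPartialAction G X) : Type _ := Π₀ t : G, ↥(θ.DC t)

/-- The element `f δ_t` for `f ∈ D t`. -/
noncomputable def deltaC [DecidableEq G] (θ : TopPartialAction G X) (t : G)
    (f : C(X, ℂ)) (hf : f ∈ θ.DC t) : θ.SkewC :=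
  DFinsupp.single t ⟨f, hf⟩

/-- The element `f δ_0` for arbitrary `f ∈ C(X) = D 1`. -/
noncomputable def deltaC0 [DecidableEq G] (θ : TopPartialAction G X) (f : C(X, ℂ)) :
    θ.SkewC :=
  θ.deltaC 1 f (by intro x hx; rw [θ.Xt_one] at hx; exact absurd (Set.mem_univ x) hx)

end TopPartialAction

/-- The multiplication of `C(X) ⋆_α G`, *assumed* to exist, to be biadditive,
associative and to satisfy `(f δ_t)(g δ_s) = α_t(α_{t⁻¹}(f) g) δ_{ts}`. -/
structure CSkewMul {G : Type*} [Group G] [DecidableEq G] {X : Type*}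
    [TopologicalSpace X] (θ : TopPartialAction G X) where
  mul : θ.SkewC → θ.SkewC → θ.SkewC
  left_distrib : ∀ x y z, mul x (y + z) = mul x y + mul x z
  right_distrib : ∀ x y z, mul (x + y) z = mul x z + mul y z
  mul_single : ∀ (t s : G) (a : C(X, ℂ)) (ha : a ∈ θ.DC t)
      (b : C(X, ℂ)) (hb : b ∈ θ.DC s) (g : G),
    ((mul (θ.deltaC t a ha) (θ.deltaC s b hb)) g : C(X, ℂ)) =
      if g = t * s then θ.amapC t (θ.amapC t⁻¹ a * b) else 0
  assoc : ∀ x y z, mul (mul x y) z = mul x (mul y z)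

variable {G : Type*} [Group G] [DecidableEq G] {X : Type*} [TopologicalSpace X]
  {θ : TopPartialAction G X}

/-- `J` is a two-sided ideal of the partial skew group ring `C(X) ⋆_α G`. -/
def IsSkewIdealC (S : CSkewMul θ) (J : Set θ.SkewC) : Prop :=
  (0 : θ.SkewC) ∈ J ∧ (∀ x ∈ J, ∀ y ∈ J, x + y ∈ J) ∧ (∀ x ∈ J, -x ∈ J) ∧
    (∀ x ∈ J, ∀ y : θ.SkewC, S.mul x y ∈ J ∧ S.mul y x ∈ J)

/-- The center of the partial skew group ring `C(X) ⋆_α G`. -/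
def centerC (S : CSkewMul θ) : Set θ.SkewC :=
  {r | ∀ s : θ.SkewC, S.mul r s = S.mul s r}

/-!
Let `r = ∑ r(t) δ_t` be central. Comparing the coefficients at `t` of `r · f δ_0` and `f δ_0 · r`
gives `r(t)(x) f(h_{t⁻¹}(x)) = f(x) r(t)(x)` for every `f ∈ C(X)`. Continuous functions separate
points, so the open set `{r(t) ≠ 0}` consists of fixed points of `h_{t⁻¹}`; topological freeness
makes it empty for `t ≠ 1`, whence `r = f δ_0`. Commuting with `1_{X_t} δ_t` then says that `f` is
constant along partial orbits, so `{f ≠ c}` is open and invariant for every `c`, and minimality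
forces `f` to be constant.
-/

namespace SetPartialAction

omit [DecidableEq G] [TopologicalSpace X]

/-- A function on `X` is invariant under a partial action if it is constant along partial orbits:
`f (h t x) = f x` whenever `h t x` is defined. -/
def InvariantFun (θ : SetPartialAction G X) {β : Type*} (f : X → β) : Prop :=
  ∀ t, ∀ x ∈ θ.Xt t⁻¹, f (θ.h t x) = f x

theorem InvariantFun.invariant_preimage {θ : SetPartialAction G X} {β : Type*} {f : X → β}
    (hf : θ.InvariantFun f) (s : Set β) : θ.Invariant (f ⁻¹' s) := by
  rintro t _ ⟨x, ⟨hxs, hxt⟩, rfl⟩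
  rwa [Set.mem_preimage, hf t x hxt]

end SetPartialAction

namespace TopPartialAction

omit [DecidableEq G] in
theorem Minimal.exists_eq_const_of_invariantFun (hmin : θ.Minimal) {β : Type*} [TopologicalSpace β]
    [T1Space β] [Nonempty β] {f : X → β} (hf : Continuous f) (hinv : θ.InvariantFun f) :
    ∃ c, f = Function.const X c := by
  rcases isEmpty_or_nonempty X with _ | ⟨⟨x₀⟩⟩
  · exact ⟨Classical.arbitrary β, Subsingleton.elim _ _⟩
  · have hne : f ⁻¹' {f x₀}ᶜ ≠ Set.univ := fun h => (Set.eq_univ_iff_forall.mp h x₀) rfl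
    have hempty : f ⁻¹' {f x₀}ᶜ = ∅ :=
      (hmin _ (isOpen_compl_singleton.preimage hf) (hinv.invariant_preimage _)).resolve_right hne
    exact ⟨f x₀, funext fun x => not_not.mp (Set.eq_empty_iff_forall_notMem.mp hempty x)⟩

omit [DecidableEq G] in
theorem TopologicallyFree.eq_zero_of_support_subset (hfree : θ.TopologicallyFree) {t : G}
    (ht : t ≠ 1) {M : Type*} [TopologicalSpace M] [T1Space M] [Zero M] {g : X → M}
    (hg : Continuous g) (hsupp : Function.support g ⊆ {x ∈ θ.Xt t⁻¹ | θ.h t x = x}) : g = 0 := by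
  have hopen : IsOpen (Function.support g) := isOpen_compl_singleton.preimage hg
  exact Function.support_eq_empty_iff.mp
    (Set.subset_eq_empty (interior_maximal hsupp hopen) (hfree t ht))

section Coefficients

omit [DecidableEq G]

theorem mem_Xt_of_apply_ne_zero {t : G} {a : C(X, ℂ)} (ha : a ∈ θ.DC t) {x : X} (hx : a x ≠ 0) :
    x ∈ θ.Xt t :=
  not_imp_comm.mp (ha x) hx

theorem mem_DC_one (f : C(X, ℂ)) : f ∈ θ.DC 1 :=
  fun x hx => absurd (θ.Xt_one ▸ Set.mem_univ x) hx

theorem amapC_apply_of_mem {t : G} (f : C(X, ℂ)) {x : X} (hx : x ∈ θ.Xt t) :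
    θ.amapC t f x = f (θ.h t⁻¹ x) :=
  if_pos hx

theorem amapC_mem_DC (t : G) (f : C(X, ℂ)) : θ.amapC t f ∈ θ.DC t :=
  fun _ hx => if_neg hx

theorem amapC_amapC_inv_mul_apply {t : G} {a : C(X, ℂ)} (ha : a ∈ θ.DC t) (b : C(X, ℂ)) (x : X) :
    θ.amapC t (θ.amapC t⁻¹ a * b) x = a x * b (θ.h t⁻¹ x) := by
  by_cases hx : x ∈ θ.Xt t
  · have hx' : x ∈ θ.Xt t⁻¹⁻¹ := by rwa [inv_inv]
    rw [amapC_apply_of_mem _ hx, ContinuousMap.mul_apply,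
      amapC_apply_of_mem _ (θ.h_mem t⁻¹ x hx'), θ.h_left_inv t⁻¹ x hx']
  · rw [amapC_mem_DC t _ x hx, ha x hx, zero_mul]

end Coefficients

theorem deltaC_apply_apply {t : G} {a : C(X, ℂ)} (ha : a ∈ θ.DC t) (s : G) (x : X) :
    (θ.deltaC t a ha s : C(X, ℂ)) x = if s = t then a x else 0 := by
  rcases eq_or_ne s t with rfl | hst
  · simp [deltaC]
  · simp [deltaC, DFinsupp.single_eq_of_ne hst, hst]

theorem deltaC0_apply_apply (f : C(X, ℂ)) (s : G) (x : X) :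
    (θ.deltaC0 f s : C(X, ℂ)) x = if s = 1 then f x else 0 :=
  deltaC_apply_apply (mem_DC_one f) s x

theorem deltaC0_zero : θ.deltaC0 0 = 0 :=
  DFinsupp.single_zero 1

theorem eq_deltaC0_of_forall_ne_one {r : θ.SkewC} (hr : ∀ t ≠ 1, r t = 0) :
    r = θ.deltaC0 (r 1) := by
  ext t x
  rw [deltaC0_apply_apply]
  split_ifs with ht
  · rw [ht]
  · simp [hr t ht]

end TopPartialAction

namespace CSkewMul

open TopPartialAction

variable (S : CSkewMul θ)

protected theorem zero_mul (r : θ.SkewC) : S.mul 0 r = 0 :=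
  (AddMonoidHom.mk' (S.mul · r) (S.right_distrib · · r)).map_zero

protected theorem mul_zero (r : θ.SkewC) : S.mul r 0 = 0 :=
  (AddMonoidHom.mk' (S.mul r) (S.left_distrib r)).map_zero

theorem deltaC_mul_deltaC_apply {t s : G} {a b : C(X, ℂ)} (ha : a ∈ θ.DC t) (hb : b ∈ θ.DC s)
    (g : G) (x : X) :
    (S.mul (θ.deltaC t a ha) (θ.deltaC s b hb) g : C(X, ℂ)) x =
      if g = t * s then a x * b (θ.h t⁻¹ x) else 0 := by
  rw [S.mul_single]
  split_ifs
  · exact amapC_amapC_inv_mul_apply ha b x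
  · rfl

theorem mul_deltaC_apply (r : θ.SkewC) {s : G} {b : C(X, ℂ)} (hb : b ∈ θ.DC s) (g : G) (x : X) :
    (S.mul r (θ.deltaC s b hb) g : C(X, ℂ)) x =
      (r (g * s⁻¹) : C(X, ℂ)) x * b (θ.h (g * s⁻¹)⁻¹ x) := by
  induction r using DFinsupp.induction with
  | h0 => simp [S.zero_mul]
  | ha t a r _ _ ih =>
    change (S.mul (θ.deltaC t a a.2 + r) _ g : C(X, ℂ)) x =
      ((θ.deltaC t a a.2 + r) (g * s⁻¹) : C(X, ℂ)) x * _
    simp only [S.right_distrib, DFinsupp.add_apply, AddSubgroup.coe_add, ContinuousMap.add_apply,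
      ih, deltaC_mul_deltaC_apply, deltaC_apply_apply, add_mul, mul_inv_eq_iff_eq_mul]
    split_ifs with hg
    · subst hg
      rw [mul_inv_cancel_right]
    · rw [zero_mul]

theorem deltaC_mul_apply {t : G} {a : C(X, ℂ)} (ha : a ∈ θ.DC t) (r : θ.SkewC) (g : G) (x : X) :
    (S.mul (θ.deltaC t a ha) r g : C(X, ℂ)) x =
      a x * (r (t⁻¹ * g) : C(X, ℂ)) (θ.h t⁻¹ x) := by
  induction r using DFinsupp.induction with
  | h0 => simp [S.mul_zero]
  | ha s b r _ _ ih =>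
    change (S.mul _ (θ.deltaC s b b.2 + r) g : C(X, ℂ)) x =
      a x * ((θ.deltaC s b b.2 + r) (t⁻¹ * g) : C(X, ℂ)) _
    simp only [S.left_distrib, DFinsupp.add_apply, AddSubgroup.coe_add, ContinuousMap.add_apply,
      ih, deltaC_mul_deltaC_apply, deltaC_apply_apply, mul_add, inv_mul_eq_iff_eq_mul, mul_ite,
      mul_zero]

theorem mul_deltaC0_apply (r : θ.SkewC) (f : C(X, ℂ)) (t : G) (x : X) :
    (S.mul r (θ.deltaC0 f) t : C(X, ℂ)) x = (r t : C(X, ℂ)) x * f (θ.h t⁻¹ x) :=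
  (S.mul_deltaC_apply r (mem_DC_one f) t x).trans (by rw [inv_one, mul_one])

theorem deltaC0_mul_apply (f : C(X, ℂ)) (r : θ.SkewC) (t : G) (x : X) :
    (S.mul (θ.deltaC0 f) r t : C(X, ℂ)) x = f x * (r t : C(X, ℂ)) x :=
  (S.deltaC_mul_apply (mem_DC_one f) r t x).trans (by rw [inv_one, one_mul, θ.h_one])

theorem deltaC0_mul_deltaC0 (f g : C(X, ℂ)) :
    S.mul (θ.deltaC0 f) (θ.deltaC0 g) = θ.deltaC0 (f * g) := by
  ext t x
  simp only [deltaC0_mul_apply, deltaC0_apply_apply, mul_ite, mul_zero, ContinuousMap.mul_apply]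

variable {S}

theorem deltaC0_mem_centerC_iff {f : C(X, ℂ)} :
    θ.deltaC0 f ∈ centerC S ↔ θ.InvariantFun f := by
  constructor
  · intro hf t x hx
    have hy := θ.h_mem t x hx
    have hcomm := congrArg (fun q : θ.SkewC => (q t : C(X, ℂ)) (θ.h t x))
      (hf (θ.deltaC t (θ.amapC t 1) (amapC_mem_DC t 1)))
    simpa only [deltaC0_mul_apply, mul_deltaC0_apply, deltaC_apply_apply, if_true,
      amapC_apply_of_mem _ hy, ContinuousMap.one_apply, mul_one, one_mul,
      θ.h_left_inv t x hx] using hcomm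
  · intro hf r
    ext t x
    rw [deltaC0_mul_apply, mul_deltaC0_apply, mul_comm]
    by_cases hx : x ∈ θ.Xt t
    · rw [hf t⁻¹ x (by rwa [inv_inv])]
    · rw [(r t).2 x hx, zero_mul, zero_mul]

theorem h_inv_apply_eq_of_apply_ne_zero [T35Space X] {r : θ.SkewC}
    (hr : ∀ f, S.mul r (θ.deltaC0 f) = S.mul (θ.deltaC0 f) r) {t : G} {x : X}
    (hx : (r t : C(X, ℂ)) x ≠ 0) : θ.h t⁻¹ x = x := by
  by_contra hne
  obtain ⟨f, hf, hfx⟩ := separatesPoints_continuous_of_t35Space hne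
  let F : C(X, ℂ) := ⟨fun y => (f y : ℂ), Complex.continuous_ofReal.comp hf⟩
  have hcomm := congrArg (fun q : θ.SkewC => (q t : C(X, ℂ)) x) (hr F)
  simp only [mul_deltaC0_apply, deltaC0_mul_apply] at hcomm
  rw [mul_comm] at hcomm
  exact hfx (Complex.ofReal_injective (mul_right_cancel₀ hx hcomm))

theorem eq_deltaC0_of_topologicallyFree [T35Space X] (hfree : θ.TopologicallyFree) {r : θ.SkewC}
    (hr : ∀ f, S.mul r (θ.deltaC0 f) = S.mul (θ.deltaC0 f) r) : r = θ.deltaC0 (r 1) := by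
  refine eq_deltaC0_of_forall_ne_one fun t ht => Subtype.ext (DFunLike.coe_injective ?_)
  refine hfree.eq_zero_of_support_subset (inv_ne_one.mpr ht) (r t : C(X, ℂ)).continuous ?_
  intro x hx
  rw [inv_inv]
  exact ⟨mem_Xt_of_apply_ne_zero (r t).2 hx, h_inv_apply_eq_of_apply_ne_zero hr hx⟩

theorem mem_centerC_iff [T35Space X] (hfree : θ.TopologicallyFree) (hmin : θ.Minimal)
    {r : θ.SkewC} :
    r ∈ centerC S ↔ ∃ c : ℂ, r = θ.deltaC0 (ContinuousMap.const X c) := by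
  constructor
  · intro hr
    have hr₁ := eq_deltaC0_of_topologicallyFree hfree fun f => hr (θ.deltaC0 f)
    rw [hr₁] at hr
    obtain ⟨c, hc⟩ := hmin.exists_eq_const_of_invariantFun (ContinuousMap.continuous _)
      (deltaC0_mem_centerC_iff.mp hr)
    exact ⟨c, hr₁.trans (congrArg θ.deltaC0 (DFunLike.coe_injective hc))⟩
  · rintro ⟨c, rfl⟩
    exact deltaC0_mem_centerC_iff.mpr fun _ _ _ => rfl

end CSkewMul

theorem center_eq_constants_of_topFree_minimal_general
    {G : Type*} [Group G] [DecidableEq G] {X : Type*} [TopologicalSpace X] [T35Space X]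
    (θ : TopPartialAction G X) (hfree : θ.TopologicallyFree) (hmin : θ.Minimal)
    (S : CSkewMul θ) :
    centerC S = {r : θ.SkewC | ∃ c : ℂ, r = θ.deltaC0 (ContinuousMap.const X c)} ∧
    (∀ r ∈ centerC S, r ≠ 0 →
      ∃ s ∈ centerC S,
        S.mul r s = θ.deltaC0 (ContinuousMap.const X 1) ∧
        S.mul s r = θ.deltaC0 (ContinuousMap.const X 1)) := by
  refine ⟨Set.ext fun r => CSkewMul.mem_centerC_iff hfree hmin, fun r hr hr₀ => ?_⟩
  obtain ⟨c, rfl⟩ := (CSkewMul.mem_centerC_iff hfree hmin).mp hr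
  have hc : c ≠ 0 := by
    rintro rfl
    exact hr₀ TopPartialAction.deltaC0_zero
  have hmul {a b : ℂ} (hab : a * b = 1) : S.mul (θ.deltaC0 (ContinuousMap.const X a))
      (θ.deltaC0 (ContinuousMap.const X b)) = θ.deltaC0 (ContinuousMap.const X 1) := by
    rw [S.deltaC0_mul_deltaC0, ← hab]
    rfl
  exact ⟨θ.deltaC0 (ContinuousMap.const X c⁻¹),
    (CSkewMul.mem_centerC_iff hfree hmin).mpr ⟨c⁻¹, rfl⟩,
    hmul (mul_inv_cancel₀ hc), hmul (inv_mul_cancel₀ hc)⟩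

theorem center_eq_constants_of_topFree_minimal
    {G' : Type*} [CommGroup G'] [DecidableEq G'] {Y : Type*} [TopologicalSpace Y]
    [CompactSpace Y] [T2Space Y]
    (θ' : TopPartialAction G' Y) (hfree : θ'.TopologicallyFree) (hmin : θ'.Minimal)
    (S : CSkewMul θ') :
    centerC S = {r : θ'.SkewC | ∃ c : ℂ, r = θ'.deltaC0 (ContinuousMap.const Y c)} ∧
    -- in particular the center of `R` is a field:
    (∀ r ∈ centerC S, r ≠ 0 →
      ∃ s ∈ centerC S,
        S.mul r s = θ'.deltaC0 (ContinuousMap.const Y 1) ∧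
        S.mul s r = θ'.deltaC0 (ContinuousMap.const Y 1)) :=
  center_eq_constants_of_topFree_minimal_general θ' hfree hmin S
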